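/- Let Q be a nonzero element of K with [w+1] ≠ 0, and set κ = [w]/[w+1] and δ = q + q^{−1}. For n ≥ 3 let M be the n×n matrix over K, with rows and columns indexed by 0,…,n−1, defined by: M₀₀ = M₀₁ = M₁₀ = κ; M₀₂ = M₂₀ = 1; M₁₂ = M₂₁ = 1; M_{ii} = δ for 1 ≤ i ≤ n−1; M_{i,i+1} = M_{i+1,i} = 1 for 2 ≤ i ≤ n−2; and all other entries 0 (the Gram matrix M^b_n(−(n−2)) of the blob algebra cell module W_{−(n−2)}(n) with the blob generator normalised to be idempotent). Then det M = [w+2]·[w+2−n]/[w+1]². -/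

import Mathlib

/-- The shifted quantum bracket `[w+m] = (Q·q^m - Q⁻¹·q^{-m})/(q - q⁻¹)`,
where `Q` is thought of as `q^w` for a formal exponent `w`. -/
noncomputable def qbr {K : Type*} [Field K] (q Q : K) (m : ℤ) : K :=
  (Q * q ^ m - Q⁻¹ * q ^ (-m)) / (q - q⁻¹)

theorem det_tri_rec {K : Type*} [Field K] (f : ℕ → ℕ → K) (n : ℕ)
    (h1 : ∀ j < n, f (n+1) j = 0) (h2 : ∀ i < n, f i (n+1) = 0) :
    (Matrix.of fun i j : Fin (n+2) => f i j).det =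
      f (n+1) (n+1) * (Matrix.of fun i j : Fin (n+1) => f i j).det
      - f (n+1) n * f n (n+1) * (Matrix.of fun i j : Fin n => f i j).det := by
  rw [Matrix.det_succ_row _ (Fin.last (n+1)), Fin.sum_univ_castSucc, Fin.sum_univ_castSucc]
  rw [Finset.sum_eq_zero]
  swap
  · intro j _
    simp [h1 j j.2]
  have e1 : ((Matrix.of fun i j : Fin (n+2) => f i j).submatrix (Fin.last (n+1)).succAbove
      (Fin.last (n+1)).succAbove) = (Matrix.of fun i j : Fin (n+1) => f i j) := by
    ext i j
    simp
  have e2 : ((Matrix.of fun i j : Fin (n+2) => f i j).submatrix (Fin.last (n+1)).succAbove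
      (Fin.last n).castSucc.succAbove).det =
      f n (n+1) * (Matrix.of fun i j : Fin n => f i j).det := by
    rw [Matrix.det_succ_column _ (Fin.last n), Fin.sum_univ_castSucc, Finset.sum_eq_zero]
    · have e3 : (((Matrix.of fun i j : Fin (n+2) => f i j).submatrix (Fin.last (n+1)).succAbove
          (Fin.last n).castSucc.succAbove).submatrix (Fin.last n).succAbove (Fin.last n).succAbove)
          = (Matrix.of fun i j : Fin n => f i j) := by
        ext i j
        have : (Fin.last n).castSucc.succAbove j.castSucc = j.castSucc.castSucc := by
          apply Fin.succAbove_of_castSucc_lt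
          simp [Fin.lt_def]
        simp [this]
      rw [e3]
      have : (Fin.last n).castSucc.succAbove (Fin.last n) = Fin.last (n+1) := by
        rw [Fin.succAbove_of_le_castSucc _ _ le_rfl]; simp
      simp [this, ← two_mul, pow_mul]
    · intro i _
      have : (Fin.last n).castSucc.succAbove (Fin.last n) = Fin.last (n+1) := by
        rw [Fin.succAbove_of_le_castSucc _ _ le_rfl]; simp
      simp [this, h2 i i.2]
  rw [e1, e2]
  have s1 : (-1 : K) ^ (n + 1 + n) = -1 := by
    rw [show n + 1 + n = 2 * n + 1 by ring, pow_succ, pow_mul]; simp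
  have s2 : (-1 : K) ^ (n + 1 + (n + 1)) = 1 := by
    rw [← two_mul, pow_mul]; simp
  simp [s1, s2]
  ring

/-- entries -/
def blobF {K : Type*} [Field K] (κ δ : K) (i j : ℕ) : K :=
      if (i = 0 ∧ j = 0) ∨ (i = 0 ∧ j = 1) ∨ (i = 1 ∧ j = 0) then κ
      else if (i = 0 ∧ j = 2) ∨ (i = 2 ∧ j = 0) then 1
      else if i = j then δ
      else if i + 1 = j ∨ j + 1 = i then 1
      else 0

theorem blob_rec {K : Type*} [Field K] (κ δ : K) (n : ℕ) :
    (Matrix.of fun i j : Fin (n+4) => blobF κ δ i j).det =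
      δ * (Matrix.of fun i j : Fin (n+3) => blobF κ δ i j).det
      - (Matrix.of fun i j : Fin (n+2) => blobF κ δ i j).det := by
  rw [det_tri_rec (blobF κ δ) (n+2)]
  · simp [blobF]
  · intro j hj
    unfold blobF
    repeat rw [if_neg (by omega)]
  · intro j hj
    unfold blobF
    repeat rw [if_neg (by omega)]

theorem qbr_rec {K : Type*} [Field K] (q : K) (hq : q ≠ 0) (Q : K) (m : ℤ) :
    qbr q Q (m - 1) = (q + q⁻¹) * qbr q Q m - qbr q Q (m + 1) := by
  unfold qbr
  rw [show -(m - 1) = -m + 1 by ring, show m - 1 = m + -1 by ring,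
    show -(m + 1) = -m + -1 by ring]
  simp only [zpow_add₀ hq]
  simp only [zpow_neg, zpow_one]
  ring

theorem blob_aux {K : Type*} [Field K] (q : K) (hq : q ≠ 0) (hq2 : q ^ 2 ≠ 1)
    (Q : K) (hQ : Q ≠ 0) (hw1 : qbr q Q 1 ≠ 0)
    (κ δ : K) (hκ : κ = qbr q Q 0 / qbr q Q 1) (hδ : δ = q + q⁻¹) (n : ℕ) :
    (Matrix.of fun i j : Fin (n+2) => blobF κ δ i j).det =
      qbr q Q 2 * qbr q Q (-n) / (qbr q Q 1) ^ 2 := by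
  have r1 := qbr_rec q hq Q 1
  have r0 := qbr_rec q hq Q 0
  norm_num [← hδ] at r1 r0
  have r2 : qbr q Q 2 = δ * qbr q Q 1 - qbr q Q 0 := by rw [r1]; ring
  induction n using Nat.twoStepInduction with
  | zero =>
    rw [Matrix.det_fin_two]
    simp [blobF]
    rw [hκ, r2]
    field_simp
  | one =>
    rw [Matrix.det_fin_three]
    simp [blobF]
    rw [r0, hκ, r2]
    field_simp
    ring
  | more n ih1 ih2 =>
    rw [blob_rec, ih1, ih2]
    have := qbr_rec q hq Q (-(n+1 : ℕ))
    rw [← hδ] at this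
    push_cast at this ⊢
    rw [show (-(n + 2 : ℤ)) = -(n+1) - 1 by ring, this, show (-(n + 1 : ℤ)) + 1 = -n by ring]
    ring

/-- Let `κ = [w]/[w+1]`, `δ = q + q⁻¹`, and for `n ≥ 3` let `M` be the `n×n` matrix with
`M₀₀ = M₀₁ = M₁₀ = κ`, `M₀₂ = M₂₀ = 1`, `M₁₂ = M₂₁ = 1`, diagonal entries `δ` for
`1 ≤ i ≤ n-1`, entries `1` at `(i,i+1)` and `(i+1,i)` for `2 ≤ i ≤ n-2`, and `0` elsewhere
(the Gram matrix `M^b_n(-(n-2))` of the blob algebra cell module `W_{-(n-2)}(n)`).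
Then `det M = [w+2]·[w+2-n]/[w+1]²`. -/
theorem blob_gram_det_minus {K : Type*} [Field K] (q : K) (hq : q ≠ 0) (hq2 : q ^ 2 ≠ 1)
    (Q : K) (hQ : Q ≠ 0) (hw1 : qbr q Q 1 ≠ 0)
    (κ δ : K) (hκ : κ = qbr q Q 0 / qbr q Q 1) (hδ : δ = q + q⁻¹)
    (n : ℕ) (hn : 3 ≤ n)
    (M : Matrix (Fin n) (Fin n) K)
    (hM : ∀ i j : Fin n, M i j =
      if ((i : ℕ) = 0 ∧ (j : ℕ) = 0) ∨ ((i : ℕ) = 0 ∧ (j : ℕ) = 1) ∨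
          ((i : ℕ) = 1 ∧ (j : ℕ) = 0) then κ
      else if ((i : ℕ) = 0 ∧ (j : ℕ) = 2) ∨ ((i : ℕ) = 2 ∧ (j : ℕ) = 0) then 1
      else if (i : ℕ) = (j : ℕ) then δ
      else if (i : ℕ) + 1 = (j : ℕ) ∨ (j : ℕ) + 1 = (i : ℕ) then 1
      else 0) :
    M.det = qbr q Q 2 * qbr q Q (2 - n) / (qbr q Q 1) ^ 2 := by
  obtain ⟨m, rfl⟩ : ∃ m, n = m + 2 := ⟨n - 2, by omega⟩
  have hMe : M = Matrix.of fun i j : Fin (m+2) => blobF κ δ i j := by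
    ext i j
    rw [hM]
    rfl
  rw [hMe, blob_aux q hq hq2 Q hQ hw1 κ δ hκ hδ]
  congr 3
  push_cast
  ring
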